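/- Let K be a finite extension of ℚ_p (p a prime) and let L|K be a ramified quadratic extension (i.e. [L:K] = 2 and the ramification index of L over K is 2). Then the unit group 𝔬^× of the ring of integers of K is not contained in the norm group N_{L|K}(L^×); that is, there exists a unit u ∈ 𝔬^× which is not the norm of any element of L^×. -/

import Mathlib

/-- An additively written, normalized (i.e. surjective onto `ℤ`) discrete
valuation on a field `K`.  All axioms are imposed at nonzero arguments only,
so the value of `v` at `0` is irrelevant.  For a finite extension `K` of
`ℚ_[p]`, the normalized valuation `v : K^× → ℤ` of the paper is such a
structure. -/
structure DValuation (K : Type*) [Field K] where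
  /-- the valuation map -/
  v : K → ℤ
  v_mul : ∀ ⦃x y : K⦄, x ≠ 0 → y ≠ 0 → v (x * y) = v x + v y
  min_le_v_add : ∀ ⦃x y : K⦄, x ≠ 0 → y ≠ 0 → x + y ≠ 0 → min (v x) (v y) ≤ v (x + y)
  v_surj : ∀ m : ℤ, ∃ x : K, x ≠ 0 ∧ v x = m

namespace DValuation

variable {K : Type*} [Field K] (w : DValuation K)

/-- `u ∈ U_m` : `u` is (a unit) congruent to `1` modulo `𝔭^m`; for `m ≥ 1`
this forces `v u = 0`, i.e. `u ∈ 𝔬^×`. -/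
def IsUnit₁ (m : ℤ) (u : K) : Prop :=
  u = 1 ∨ m ≤ w.v (u - 1)

end DValuation

namespace DValuation

variable {K : Type*} [Field K] (w : DValuation K)

/-- `x` has valuation at least `n` (with `0` of infinite valuation). -/
def Ge (n : ℤ) (x : K) : Prop := x = 0 ∨ n ≤ w.v x

theorem v_one : w.v 1 = 0 := by
  have := w.v_mul (one_ne_zero (α := K)) (one_ne_zero (α := K))
  rw [mul_one] at this
  omega

theorem v_neg_one : w.v (-1) = 0 := by
  have h : (-1 : K) ≠ 0 := neg_ne_zero.mpr one_ne_zero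
  have := w.v_mul h h
  rw [neg_mul_neg, mul_one, v_one] at this
  omega

theorem v_neg {x : K} (hx : x ≠ 0) : w.v (-x) = w.v x := by
  have h : (-1 : K) ≠ 0 := neg_ne_zero.mpr one_ne_zero
  have := w.v_mul h hx
  rw [v_neg_one, neg_one_mul] at this
  omega

theorem v_pow {x : K} (hx : x ≠ 0) (n : ℕ) : w.v (x ^ n) = n * w.v x := by
  induction n with
  | zero => simp [v_one]
  | succ n ih =>
    rw [pow_succ, w.v_mul (pow_ne_zero n hx) hx, ih]
    push_cast
    ring

theorem v_div {x y : K} (hx : x ≠ 0) (hy : y ≠ 0) : w.v (x / y) = w.v x - w.v y := by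
  have := w.v_mul (div_ne_zero hx hy) hy
  rw [div_mul_cancel₀ _ hy] at this
  omega

variable {w}

theorem ge_zero (n : ℤ) : w.Ge n 0 := Or.inl rfl

theorem ge_self (x : K) : w.Ge (w.v x) x := Or.inr le_rfl

theorem Ge.le {n : ℤ} {x : K} (h : w.Ge n x) (hx : x ≠ 0) : n ≤ w.v x :=
  h.resolve_left hx

theorem Ge.mono {m n : ℤ} {x : K} (h : w.Ge n x) (hmn : m ≤ n) : w.Ge m x :=
  h.imp id (fun h => hmn.trans h)

theorem Ge.add {n : ℤ} {x y : K} (hx : w.Ge n x) (hy : w.Ge n y) : w.Ge n (x + y) := by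
  by_cases h0 : x = 0
  · simpa [h0] using hy
  by_cases h1 : y = 0
  · simpa [h1] using hx
  by_cases h2 : x + y = 0
  · exact Or.inl h2
  · exact Or.inr ((le_min (hx.le h0) (hy.le h1)).trans (w.min_le_v_add h0 h1 h2))

theorem Ge.neg {n : ℤ} {x : K} (hx : w.Ge n x) : w.Ge n (-x) := by
  by_cases h0 : x = 0
  · simpa [h0] using hx
  · exact Or.inr (by rw [w.v_neg h0]; exact hx.le h0)

theorem Ge.sub {n : ℤ} {x y : K} (hx : w.Ge n x) (hy : w.Ge n y) : w.Ge n (x - y) := by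
  rw [sub_eq_add_neg]
  exact hx.add hy.neg

theorem Ge.mul {m n : ℤ} {x y : K} (hx : w.Ge m x) (hy : w.Ge n y) : w.Ge (m + n) (x * y) := by
  by_cases h0 : x = 0
  · exact Or.inl (by simp [h0])
  by_cases h1 : y = 0
  · exact Or.inl (by simp [h1])
  · refine Or.inr ?_
    rw [w.v_mul h0 h1]
    exact add_le_add (hx.le h0) (hy.le h1)

theorem Ge.mul' {m n k : ℤ} {x y : K} (hx : w.Ge m x) (hy : w.Ge n y) (hk : k ≤ m + n) :
    w.Ge k (x * y) := (hx.mul hy).mono hk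

theorem ge_sum {ι : Type*} {n : ℤ} (s : Finset ι) (f : ι → K) (h : ∀ i ∈ s, w.Ge n (f i)) :
    w.Ge n (∑ i ∈ s, f i) := by
  classical
  induction s using Finset.induction_on with
  | empty => simpa using ge_zero n
  | insert a s ha ih =>
    rw [Finset.sum_insert ha]
    exact (h a (by simp)).add (ih (fun i hi => h i (by simp [hi])))

theorem ge_one : w.Ge 0 (1 : K) := Or.inr (by rw [v_one])

theorem ge_nat (n : ℕ) : w.Ge 0 (n : K) := by
  induction n with
  | zero => simpa using ge_zero 0
  | succ n ih =>
    push_cast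
    exact ih.add ge_one

theorem ge_cancel {m : ℤ} {x y : K} (hx : x ≠ 0) (h : w.Ge (w.v x + m) (x * y)) : w.Ge m y := by
  by_cases hy : y = 0
  · exact Or.inl hy
  · have := h.le (mul_ne_zero hx hy)
    rw [w.v_mul hx hy] at this
    exact Or.inr (by omega)

end DValuation

section residue
open DValuation

variable (p : ℕ) [Fact p.Prime] (K : Type*) [Field K] [Algebra ℚ_[p] K]
  [FiniteDimensional ℚ_[p] K] (w : DValuation K)

theorem vp_pos (hext : ∀ x : ℚ_[p], x ≠ 0 →
      w.v (algebraMap ℚ_[p] K x) = w.v (algebraMap ℚ_[p] K (p : ℚ_[p])) * x.valuation) :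
    1 ≤ w.v (algebraMap ℚ_[p] K (p : ℚ_[p])) := by
  have hp0 : (p : ℚ_[p]) ≠ 0 := by exact_mod_cast (Fact.out : p.Prime).ne_zero
  have hpK : algebraMap ℚ_[p] K (p : ℚ_[p]) ≠ 0 :=
    (map_ne_zero _).mpr hp0
  have h0 : 0 ≤ w.v (algebraMap ℚ_[p] K (p : ℚ_[p])) := by
    refine Ge.le ?_ hpK
    rw [map_natCast]
    exact ge_nat p
  by_contra hcon
  have h1 : w.v (algebraMap ℚ_[p] K (p : ℚ_[p])) = 0 := by omega
  have hQ : ∀ x : ℚ_[p], w.Ge 0 (algebraMap ℚ_[p] K x) := by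
    intro x
    by_cases hx : x = 0
    · exact Or.inl (by simp [hx])
    · refine Or.inr ?_
      rw [hext x hx, h1, zero_mul]
  obtain ⟨x, hx0, hx⟩ := w.v_surj (-1)
  obtain ⟨f, hf, hfx⟩ := (Algebra.IsIntegral.isIntegral (R := ℚ_[p]) x)
  rw [hf.as_sum] at hfx
  simp only [Polynomial.eval₂_add, Polynomial.eval₂_pow, Polynomial.eval₂_X,
    Polynomial.eval₂_finsetSum, Polynomial.eval₂_mul, Polynomial.eval₂_C] at hfx
  have h2 : x ^ f.natDegree = -∑ i ∈ Finset.range f.natDegree,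
      algebraMap ℚ_[p] K (f.coeff i) * x ^ i := eq_neg_of_add_eq_zero_left hfx
  have h3 : w.Ge (-(f.natDegree : ℤ) + 1) (x ^ f.natDegree) := by
    rw [h2]
    refine (ge_sum _ _ ?_).neg
    intro i hi
    rw [Finset.mem_range] at hi
    refine (hQ _).mul' (ge_self (x ^ i)) ?_
    rw [w.v_pow hx0, hx]
    omega
  have h4 := h3.le (pow_ne_zero _ hx0)
  rw [w.v_pow hx0, hx] at h4
  omega

theorem finite_of_rank_zmod.{u} (p : ℕ) [Fact p.Prime] {V : Type u} [AddCommGroup V]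
    [Module (ZMod p) V] (n : ℕ) (h : Module.rank (ZMod p) V ≤ (n : ℕ)) : Finite V := by
  have hfin : Module.Finite (ZMod p) V := by
    rw [← Module.rank_lt_aleph0_iff]
    exact h.trans_lt Cardinal.natCast_lt_aleph0
  exact Module.finite_of_finite (ZMod p)

theorem residue_reps.{u} (p : ℕ) [Fact p.Prime] (K : Type u) [Field K] [Algebra ℚ_[p] K]
    [FiniteDimensional ℚ_[p] K] (w : DValuation K) (hext : ∀ x : ℚ_[p], x ≠ 0 →
      w.v (algebraMap ℚ_[p] K x) = w.v (algebraMap ℚ_[p] K (p : ℚ_[p])) * x.valuation) :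
    ∃ (κ : Type u) (_ : Finite κ) (r : κ → K), (∀ s, w.Ge 0 (r s)) ∧
      (∀ s s', w.Ge 1 (r s - r s') → s = s') ∧ ∀ a, w.Ge 0 a → ∃ s, w.Ge 1 (a - r s) := by
  classical
  have hvp := vp_pos p K w hext
  have hQ0 : ∀ z : ℚ_[p], ‖z‖ ≤ 1 → w.Ge 0 (algebraMap ℚ_[p] K z) := by
    intro z hz
    by_cases hz0 : z = 0
    · exact Or.inl (by simp [hz0])
    · refine Or.inr ?_
      rw [hext z hz0]
      have : 0 ≤ z.valuation := by
        rwa [Padic.norm_le_one_iff_val_nonneg] at hz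
      positivity
  have hQ1 : ∀ z : ℚ_[p], ‖z‖ < 1 → w.Ge 1 (algebraMap ℚ_[p] K z) := by
    intro z hz
    by_cases hz0 : z = 0
    · exact Or.inl (by simp [hz0])
    · refine Or.inr ?_
      rw [hext z hz0]
      have : 1 ≤ z.valuation := by
        by_contra hcon
        rw [Padic.norm_eq_zpow_neg_valuation hz0] at hz
        have h1 : (1 : ℝ) ≤ p := by exact_mod_cast (Fact.out : p.Prime).one_le
        have := one_le_zpow₀ h1 (n := -z.valuation) (by omega)
        linarith
      nlinarith
  let A : AddSubgroup K :=
    { carrier := {x | w.Ge 0 x}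
      zero_mem' := ge_zero 0
      add_mem' := fun h h' => Ge.add h h'
      neg_mem' := fun h => Ge.neg h }
  let M : AddSubgroup A :=
    { carrier := {x | w.Ge 1 (x : K)}
      zero_mem' := ge_zero 1
      add_mem' := fun h h' => Ge.add h h'
      neg_mem' := fun h => Ge.neg h }
  have hq : ∀ a b : A, (QuotientAddGroup.mk a : A ⧸ M) = QuotientAddGroup.mk b ↔
      w.Ge 1 ((b : K) - a) := by
    intro a b
    rw [QuotientAddGroup.eq]
    change w.Ge 1 (((-a + b : A)) : K) ↔ _
    simp [neg_add_eq_sub]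
  have hpM : ∀ x : A ⧸ M, p • x = 0 := by
    intro x
    induction x using QuotientAddGroup.induction_on with
    | H a =>
      rw [← QuotientAddGroup.mk_nsmul, QuotientAddGroup.eq_zero_iff]
      change w.Ge 1 ((p • a : A) : K)
      rw [AddSubgroup.coe_nsmul, nsmul_eq_mul]
      have h1 : w.Ge 1 ((p : K)) := by
        have := hQ1 (p : ℚ_[p]) Padic.norm_p_lt_one
        simpa using this
      exact h1.mul' a.2 (by norm_num)
  let _ : Module (ZMod p) (A ⧸ M) := AddCommGroup.zmodModule hpM
  have hout : ∀ s : A ⧸ M, (QuotientAddGroup.mk s.out : A ⧸ M) = s := fun s => Quotient.out_eq s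
  have hrank : Module.rank (ZMod p) (A ⧸ M) ≤ (Module.finrank ℚ_[p] K : ℕ) := by
    apply rank_le
    intro s hs
    have hli : LinearIndependent ℚ_[p] (fun i : s => ((i : A ⧸ M).out : K)) := by
      rw [Fintype.linearIndependent_iff]
      intro c hc
      by_contra! hcon
      obtain ⟨j, hj⟩ := hcon
      obtain ⟨i0, -, hi0⟩ := Finset.exists_max_image (Finset.univ : Finset s) (fun i => ‖c i‖)
        ⟨j, Finset.mem_univ j⟩
      have hci0 : c i0 ≠ 0 := by
        have := hi0 j (Finset.mem_univ j)
        have h2 := norm_pos_iff.mpr hj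
        exact norm_pos_iff.mp (by linarith)
      have hd : ∀ i, ‖c i / c i0‖ ≤ 1 := by
        intro i
        rw [norm_div]
        exact div_le_one_of_le₀ (hi0 i (Finset.mem_univ i)) (norm_nonneg _)
      have hn : ∀ i, ∃ n : ℕ, ‖c i / c i0 - n‖ < 1 := by
        intro i
        obtain ⟨n, -, hn⟩ := PadicInt.exists_mem_range (⟨c i / c i0, hd i⟩ : ℤ_[p])
        refine ⟨n, ?_⟩
        rw [IsLocalRing.mem_maximalIdeal, PadicInt.mem_nonunits] at hn
        rw [PadicInt.norm_def] at hn
        exact hn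
      choose n hn using hn
      have hsum : ∑ i, algebraMap ℚ_[p] K (c i / c i0) * ((i : A ⧸ M).out : K) = 0 := by
        have h1 : ∀ i : s, algebraMap ℚ_[p] K (c i / c i0) * ((i : A ⧸ M).out : K) =
            (algebraMap ℚ_[p] K (c i0))⁻¹ * (c i • ((i : A ⧸ M).out : K)) := by
          intro i
          rw [map_div₀, Algebra.smul_def]
          ring
        simp_rw [h1]
        rw [← Finset.mul_sum, hc, mul_zero]
      have hsum2 : w.Ge 1 (∑ i : s, (n i : K) * ((i : A ⧸ M).out : K)) := by
        have h1 : ∑ i : s, (n i : K) * ((i : A ⧸ M).out : K) =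
            - ∑ i : s, algebraMap ℚ_[p] K (c i / c i0 - n i) * ((i : A ⧸ M).out : K) := by
          simp only [map_sub, sub_mul, Finset.sum_sub_distrib, hsum, map_natCast]
          ring
        rw [h1]
        refine (ge_sum _ _ ?_).neg
        intro i _
        exact (hQ1 _ (hn i)).mul' (i : A ⧸ M).out.2 (by norm_num)
      have hsum3 : ∑ i : s, (n i : ZMod p) • (i : A ⧸ M) = 0 := by
        have h1 : ∀ i : s, (n i : ZMod p) • (i : A ⧸ M) =
            (QuotientAddGroup.mk' M) (n i • (i : A ⧸ M).out) := by
          intro i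
          rw [map_nsmul, Nat.cast_smul_eq_nsmul]
          congr 1
          exact (hout i).symm
        simp_rw [h1]
        rw [← map_sum, QuotientAddGroup.mk'_apply, QuotientAddGroup.eq_zero_iff]
        change w.Ge 1 ((∑ i : s, n i • (i : A ⧸ M).out : A) : K)
        rw [AddSubgroup.val_finsetSum]
        simpa [nsmul_eq_mul] using hsum2
      have h0 := (Fintype.linearIndependent_iff.mp hs) (fun i => (n i : ZMod p)) hsum3 i0
      have h5 : (p : ℕ) ∣ n i0 := (ZMod.natCast_eq_zero_iff _ _).mp h0
      have h6 : ‖((n i0 : ℕ) : ℚ_[p])‖ < 1 := by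
        have := (Padic.norm_intCast_lt_one_iff (p := p) (k := (n i0 : ℤ))).mpr (by exact_mod_cast h5)
        simpa using this
      have h7 := hn i0
      rw [div_self hci0] at h7
      have h8 := IsUltrametricDist.norm_add_le_max ((1 : ℚ_[p]) - n i0) (n i0)
      rw [sub_add_cancel, norm_one] at h8
      have := max_lt h7 h6
      linarith
    have := hli.fintype_card_le_finrank
    simpa using this
  have hfinite : Finite (A ⧸ M) := finite_of_rank_zmod p _ hrank
  refine ⟨A ⧸ M, hfinite, fun s => (s.out : K), fun s => s.out.2, ?_, ?_⟩
  · intro s s' h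
    rw [← hout s, ← hout s']
    exact ((hq _ _).mpr h).symm
  · intro a ha
    refine ⟨QuotientAddGroup.mk (⟨a, ha⟩ : A), ?_⟩
    exact (hq _ ⟨a, ha⟩).mp (hout _)

end residue

theorem digits_exist.{u} {κ : Type u} {K L : Type*} [Finite κ] [Field K] [Field L] (w : DValuation K)
    (wL : DValuation L) (i : K →+* L)
    (r : κ → K) (hr0 : ∀ s, w.Ge 0 (r s)) (hr1 : ∀ s s', w.Ge 1 (r s - r s') → s = s')
    (hrL0 : ∀ y : L, wL.Ge 0 y → ∃ s, wL.Ge 1 (y - i (r s)))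
    (π : K) (hπ0 : π ≠ 0) (hπ : w.v π = 1) (P : L) (hP0 : P ≠ 0) (hP : wL.v P = 1) (d : ℕ) :
    ∃ (X : Type u) (_ : Finite X) (FL : X → L) (FK : X → K),
      (∀ x, w.Ge 0 (FK x)) ∧ (∀ y, wL.Ge 0 y → ∃ x, wL.Ge d (y - FL x)) ∧
      (∀ x x', w.Ge d (FK x - FK x') → x = x') := by
  induction d with
  | zero =>
    refine ⟨PUnit, inferInstance, fun _ => 0, fun _ => 0, fun _ => DValuation.ge_zero 0, ?_, ?_⟩
    · intro y hy
      exact ⟨PUnit.unit, by simpa using hy⟩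
    · intro x x' _
      rfl
  | succ d ih =>
    obtain ⟨X, hX, FL, FK, h0, h1, h2⟩ := ih
    refine ⟨κ × X, inferInstance, fun x => i (r x.1) + P * FL x.2,
      fun x => r x.1 + π * FK x.2, ?_, ?_, ?_⟩
    · intro x
      exact (hr0 _).add ((DValuation.ge_self π).mul' (h0 _) (by omega))
    · intro y hy
      obtain ⟨s, hs⟩ := hrL0 y hy
      have h3 : wL.Ge 0 ((y - i (r s)) / P) := by
        apply DValuation.ge_cancel hP0
        rw [mul_div_cancel₀ _ hP0, hP]
        simpa using hs
      obtain ⟨x, hx⟩ := h1 _ h3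
      refine ⟨(s, x), ?_⟩
      have h4 : y - (i (r s) + P * FL x) = P * ((y - i (r s)) / P - FL x) := by
        rw [mul_sub, mul_div_cancel₀ _ hP0]
        ring
      simp only
      rw [h4]
      exact (DValuation.ge_self P).mul' hx (by push_cast; omega)
    · rintro ⟨s, x⟩ ⟨s', x'⟩ h
      simp only at h
      have h5 : ∀ x, w.Ge 1 (π * FK x) := fun x =>
        (DValuation.ge_self π).mul' (h0 _) (by omega)
      have h6 : s = s' := by
        apply hr1
        have h7 : r s - r s' = (r s + π * FK x - (r s' + π * FK x')) - (π * FK x - π * FK x') := by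
          ring
        rw [h7]
        exact (h.mono (by push_cast; omega)).sub ((h5 _).sub (h5 _))
      subst h6
      have h8 : x = x' := by
        apply h2
        apply DValuation.ge_cancel hπ0
        have h9 : π * (FK x - FK x') = r s + π * FK x - (r s + π * FK x') := by ring
        rw [h9, hπ]
        exact h.mono (by push_cast; omega)
      rw [h8]

open DValuation in
theorem ramified_aux {κ K L : Type*} [Finite κ] [Field K] (w : DValuation K)
    [Field L] [Algebra K L] (hL2 : Module.finrank K L = 2)
    (wL : DValuation L)
    (hram : ∀ x : K, x ≠ 0 → wL.v (algebraMap K L x) = 2 * w.v x) (h2K : (2 : K) ≠ 0)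
    (r : κ → K) (hr0 : ∀ s, w.Ge 0 (r s)) (hr1 : ∀ s s', w.Ge 1 (r s - r s') → s = s')
    (hr2 : ∀ a, w.Ge 0 a → ∃ s, w.Ge 1 (a - r s)) :
    ∃ u : K, u ≠ 0 ∧ w.v u = 0 ∧ ¬ ∃ y : L, y ≠ 0 ∧ Algebra.norm K y = u := by
  by_contra! hcon
  obtain ⟨P, hP0, hP⟩ := wL.v_surj 1
  -- valuations of elements `a + b P`
  have hbase : ∀ (n : ℤ) (a : K), w.Ge n a → wL.Ge (2 * n) (algebraMap K L a) := by
    intro n a ha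
    by_cases h : a = 0
    · exact Or.inl (by simp [h])
    · refine Or.inr ?_
      rw [hram a h]
      have := ha.le h
      omega
  have hsep : ∀ a b : K, a ≠ 0 → b ≠ 0 → ∀ n : ℤ,
      wL.Ge n (algebraMap K L a + algebraMap K L b * P) → n ≤ 2 * w.v a ∧ n ≤ 2 * w.v b + 1 := by
    intro a b ha hb n h
    have haL : algebraMap K L a ≠ 0 := (map_ne_zero _).mpr ha
    have hbL : algebraMap K L b ≠ 0 := (map_ne_zero _).mpr hb
    have hva : wL.v (algebraMap K L a) = 2 * w.v a := hram a ha
    have hvb : wL.v (algebraMap K L b * P) = 2 * w.v b + 1 := by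
      rw [wL.v_mul hbL hP0, hram b hb, hP]
    have hbP := mul_ne_zero hbL hP0
    by_cases hc : 2 * w.v a ≤ 2 * w.v b + 1
    · refine ⟨?_, ?_⟩ <;>
      · by_contra hn
        have h1 : wL.Ge (2 * w.v a + 1) (algebraMap K L a) := by
          have h2 : algebraMap K L a =
            (algebraMap K L a + algebraMap K L b * P) - algebraMap K L b * P := by ring
          rw [h2]
          exact (h.mono (by omega)).sub ((ge_self _).mono (by omega))
        have := h1.le haL
        omega
    · refine ⟨?_, ?_⟩ <;>
      · by_contra hn
        have h1 : wL.Ge (2 * w.v b + 2) (algebraMap K L b * P) := by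
          have h2 : algebraMap K L b * P =
            (algebraMap K L a + algebraMap K L b * P) - algebraMap K L a := by ring
          rw [h2]
          exact (h.mono (by omega)).sub ((ge_self _).mono (by omega))
        have := h1.le hbP
        omega
  have hcoord : ∀ (a b : K) (n : ℤ), wL.Ge n (algebraMap K L a + algebraMap K L b * P) →
      (a = 0 ∨ n ≤ 2 * w.v a) ∧ (b = 0 ∨ n ≤ 2 * w.v b + 1) := by
    intro a b n h
    by_cases ha : a = 0
    · refine ⟨Or.inl ha, ?_⟩
      by_cases hb : b = 0
      · exact Or.inl hb
      · refine Or.inr ?_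
        have hbL : algebraMap K L b ≠ 0 := (map_ne_zero _).mpr hb
        rw [ha, map_zero, zero_add] at h
        have := h.le (mul_ne_zero hbL hP0)
        rw [wL.v_mul hbL hP0, hram b hb, hP] at this
        exact this
    · by_cases hb : b = 0
      · refine ⟨Or.inr ?_, Or.inl hb⟩
        rw [hb, map_zero, zero_mul, add_zero] at h
        have := h.le ((map_ne_zero _).mpr ha)
        rwa [hram a ha] at this
      · have := hsep a b ha hb n h
        exact ⟨Or.inr this.1, Or.inr this.2⟩
  have hge_coord : ∀ (a b : K) (n m : ℤ), w.Ge n a → w.Ge m b → ∀ k : ℤ, k ≤ 2 * n →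
      k ≤ 2 * m + 1 → wL.Ge k (algebraMap K L a + algebraMap K L b * P) := by
    intro a b n m ha hb k h1 h2
    exact ((hbase n a ha).mono h1).add ((hbase m b hb).mul' (ge_self P) (by omega))
  -- the basis `1, P`
  have hzero : ∀ a b : K, algebraMap K L a + algebraMap K L b * P = 0 → a = 0 ∧ b = 0 := by
    intro a b h
    have h1 := hcoord a b (max (2 * w.v a) (2 * w.v b + 1) + 1) (Or.inl h)
    constructor
    · rcases h1.1 with h | h
      · exact h
      · omega
    · rcases h1.2 with h | h
      · exact h
      · omega
  have hli : LinearIndependent K ![(1 : L), P] := by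
    rw [LinearIndependent.pair_iff]
    intro a b h
    apply hzero
    simpa [Algebra.smul_def] using h
  have hfd : FiniteDimensional K L := FiniteDimensional.of_finrank_pos (by omega)
  let B := basisOfLinearIndependentOfCardEqFinrank hli (by simp [hL2])
  have hB0 : B 0 = 1 := by simp [B]
  have hB1 : B 1 = P := by simp [B]
  have hspan : ∀ y : L, ∃ a b : K, y = algebraMap K L a + algebraMap K L b * P := by
    intro y
    refine ⟨B.repr y 0, B.repr y 1, ?_⟩
    have := B.sum_repr y
    rw [Fin.sum_univ_two, hB0, hB1] at this
    rw [Algebra.smul_def, Algebra.smul_def, mul_one] at this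
    exact this.symm
  have hreprP : ∀ a b : K, B.repr (algebraMap K L a + algebraMap K L b * P) =
      Finsupp.single 0 a + Finsupp.single 1 b := by
    intro a b
    have : algebraMap K L a + algebraMap K L b * P = a • B 0 + b • B 1 := by
      rw [hB0, hB1]
      simp [Algebra.smul_def]
    rw [this]
    simp
  obtain ⟨N', T, hPP⟩ := hspan (P * P)
  obtain ⟨N, rfl⟩ : ∃ N, N' = -N := ⟨-N', by simp⟩
  have hnorm : ∀ a b : K, Algebra.norm K (algebraMap K L a + algebraMap K L b * P) =
      a * a + a * b * T + b * b * N := by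
    intro a b
    rw [Algebra.norm_eq_matrix_det B, Matrix.det_fin_two]
    simp only [Algebra.leftMulMatrix_eq_repr_mul, hB0, hB1]
    have h1 : (algebraMap K L a + algebraMap K L b * P) * P =
        algebraMap K L (-(b * N)) + algebraMap K L (a + b * T) * P := by
      rw [add_mul, mul_assoc, hPP]
      simp only [map_neg, map_mul, map_add]
      ring
    rw [mul_one, h1, hreprP, hreprP]
    simp
    ring
  -- valuations of `T` and `N`
  have hvPP : wL.v (P * P) = 2 := by rw [wL.v_mul hP0 hP0, hP]; norm_num
  have hPP0 := mul_ne_zero hP0 hP0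
  have hTN := hcoord (-N) T 2 (by rw [← hPP, ← hvPP]; exact ge_self _)
  have hT : w.Ge 1 T := hTN.2.imp id (fun h => by omega)
  have hNg : w.Ge 1 N := by
    have : w.Ge 1 (-N) := hTN.1.imp id (fun h => by omega)
    simpa using this.neg
  have hN2 : ¬ w.Ge 2 N := by
    intro h
    have h1 := hge_coord (-N) T 2 1 h.neg hT 3 (by norm_num) (by norm_num)
    rw [← hPP] at h1
    have := h1.le hPP0
    omega
  have hN0 : N ≠ 0 := fun h => hN2 (Or.inl h)
  have hN : w.v N = 1 := by
    have h1 := hNg.le hN0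
    by_contra h2
    exact hN2 (Or.inr (by omega))
  -- norms of integrality
  have hintegral : ∀ y : L, w.Ge 0 (Algebra.norm K y) → wL.Ge 0 y := by
    intro y hy
    obtain ⟨a, b, rfl⟩ := hspan y
    rw [hnorm] at hy
    have key1 : ∀ m : ℤ, m < 0 → w.Ge m a → w.Ge m b → w.Ge (m + 1) a := by
      intro m hm ha hb
      have h1 : w.Ge (2 * m + 1) (a * a) := by
        have h2 : a * a = (a * a + a * b * T + b * b * N) - a * b * T - b * b * N := by ring
        rw [h2]
        exact ((hy.mono (by omega)).sub ((ha.mul hb).mul' hT (by omega))).sub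
          ((hb.mul hb).mul' hNg (by omega))
      by_cases ha0 : a = 0
      · exact Or.inl ha0
      · have := h1.le (mul_ne_zero ha0 ha0)
        rw [w.v_mul ha0 ha0] at this
        exact Or.inr (by omega)
    have key2 : ∀ m : ℤ, m < 0 → w.Ge (m + 1) a → w.Ge m b → w.Ge (m + 1) b := by
      intro m hm ha hb
      have h1 : w.Ge (2 * m + 2) (b * b * N) := by
        have h2 : b * b * N = (a * a + a * b * T + b * b * N) - a * b * T - a * a := by ring
        rw [h2]
        exact ((hy.mono (by omega)).sub ((ha.mul hb).mul' hT (by omega))).sub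
          (ha.mul' ha (by omega))
      by_cases hb0 : b = 0
      · exact Or.inl hb0
      · have := h1.le (mul_ne_zero (mul_ne_zero hb0 hb0) hN0)
        rw [w.v_mul (mul_ne_zero hb0 hb0) hN0, w.v_mul hb0 hb0, hN] at this
        exact Or.inr (by omega)
    have key3 : ∀ k : ℕ, w.Ge (-(k : ℤ)) a → w.Ge (-(k : ℤ)) b → w.Ge 0 a ∧ w.Ge 0 b := by
      intro k
      induction k with
      | zero => intro h1 h2; exact ⟨by simpa using h1, by simpa using h2⟩
      | succ k ih =>
        intro h1 h2
        have h3 := key1 _ (by omega) h1 h2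
        have h4 := key2 _ (by omega) h3 h2
        exact ih (h3.mono (by omega)) (h4.mono (by omega))
    have h5 := key3 ((w.v a).natAbs + (w.v b).natAbs) ((ge_self a).mono (by omega))
      ((ge_self b).mono (by omega))
    exact hge_coord a b 0 0 h5.1 h5.2 0 (by norm_num) (by norm_num)
  have hnormP : Algebra.norm K P = N := by
    have := hnorm 0 1
    simpa using this
  -- every integral element is the norm of an integral element
  have hsurj : ∀ x : K, w.Ge 0 x → ∃ y : L, wL.Ge 0 y ∧ Algebra.norm K y = x := by
    intro x hx
    have h1 : ∃ y : L, Algebra.norm K y = x := by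
      by_cases hx0 : x = 0
      · exact ⟨0, by rw [hx0]; exact Algebra.norm_zero⟩
      obtain ⟨k, hk⟩ := Int.eq_ofNat_of_zero_le (hx.le hx0)
      have hNk := pow_ne_zero k hN0
      obtain ⟨y, -, hy⟩ := hcon (x / N ^ k) (div_ne_zero hx0 hNk) (by
        rw [w.v_div hx0 hNk, w.v_pow hN0, hN, hk]; simp)
      refine ⟨y * P ^ k, ?_⟩
      rw [map_mul, map_pow, hy, hnormP, div_mul_cancel₀ _ hNk]
    obtain ⟨y, hy⟩ := h1
    exact ⟨y, hintegral y (by rw [hy]; exact hx), hy⟩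
  -- the different exponent
  have hD0 : algebraMap K L T + algebraMap K L (-2) * P ≠ 0 := by
    intro h
    have := (hzero _ _ h).2
    exact h2K (by simpa using this)
  obtain ⟨D, hD⟩ : ∃ D, wL.v (algebraMap K L T + algebraMap K L (-2) * P) = D := ⟨_, rfl⟩
  have hDc := hcoord T (-2) D (by rw [← hD]; exact ge_self _)
  have hD2 : D ≤ 2 * w.v 2 + 1 := by
    have := hDc.2.resolve_left (neg_ne_zero.mpr h2K)
    rwa [w.v_neg h2K] at this
  have hD1 : 1 ≤ D := by
    have h2 : w.Ge 0 (-2 : K) := by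
      have := (ge_nat (w := w) 2).neg
      simpa using this
    have := (hge_coord T (-2) 1 0 hT h2 1 (by norm_num) (by norm_num)).le hD0
    omega
  obtain ⟨d, rfl⟩ := Int.eq_ofNat_of_zero_le (show 0 ≤ D by omega)
  -- congruence of norms
  have hhalf : ∀ c : K, (c = 0 ∨ (d : ℤ) ≤ 2 * w.v c) → w.Ge (((d : ℤ) + 1) / 2) c :=
    fun c h => h.imp id (fun h => by omega)
  have hcongr : ∀ y y' : L, wL.Ge 0 y → wL.Ge d (y' - y) →
      w.Ge d (Algebra.norm K y' - Algebra.norm K y) := by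
    intro y y' hy hyy
    obtain ⟨a, b, rfl⟩ := hspan y
    obtain ⟨c, e, hce⟩ := hspan (y' - (algebraMap K L a + algebraMap K L b * P))
    have hy' : y' = algebraMap K L (a + c) + algebraMap K L (b + e) * P := by
      rw [map_add, map_add]
      linear_combination hce
    rw [hce] at hyy
    have h1 := hcoord _ _ _ hy
    have h2 := hcoord _ _ _ hyy
    have ha : w.Ge 0 a := h1.1.imp id (fun h => by omega)
    have hb : w.Ge 0 b := h1.2.imp id (fun h => by omega)
    have hc : w.Ge (((d : ℤ) + 1) / 2) c := hhalf c h2.1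
    have he : w.Ge ((d : ℤ) / 2) e := h2.2.imp id (fun h => by omega)
    have hT' : w.Ge (((d : ℤ) + 1) / 2) T := hhalf T hDc.1
    have h2' : w.Ge ((d : ℤ) / 2) (2 : K) := Or.inr (by omega)
    rw [hy', hnorm, hnorm]
    have hexp : (a + c) * (a + c) + (a + c) * (b + e) * T + (b + e) * (b + e) * N -
        (a * a + a * b * T + b * b * N) =
        2 * c * a + c * c + a * (e * T) + b * (c * T) + c * (T * e) + 2 * e * (b * N)
          + e * e * N := by ring
    rw [hexp]
    have t1 : w.Ge d (2 * c * a) := (h2'.mul hc).mul' ha (by omega)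
    have t2 : w.Ge d (c * c) := hc.mul' hc (by omega)
    have t3 : w.Ge d (a * (e * T)) := ha.mul' (he.mul hT') (by omega)
    have t4 : w.Ge d (b * (c * T)) := hb.mul' (hc.mul hT') (by omega)
    have t5 : w.Ge d (c * (T * e)) := hc.mul' (hT'.mul he) (by omega)
    have t6 : w.Ge d (2 * e * (b * N)) := (h2'.mul he).mul' (hb.mul hNg) (by omega)
    have t7 : w.Ge d (e * e * N) := (he.mul he).mul' hNg (by omega)
    exact (((((t1.add t2).add t3).add t4).add t5).add t6).add t7
  -- digits
  have hrL : ∀ y : L, wL.Ge 0 y → ∃ s, wL.Ge 1 (y - algebraMap K L (r s)) := by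
    intro y hy
    obtain ⟨a, b, rfl⟩ := hspan y
    have h1 := hcoord _ _ _ hy
    have ha : w.Ge 0 a := h1.1.imp id (fun h => by omega)
    have hb : w.Ge 0 b := h1.2.imp id (fun h => by omega)
    obtain ⟨s, hs⟩ := hr2 a ha
    refine ⟨s, ?_⟩
    have h2 := hge_coord (a - r s) b 1 0 hs hb 1 (by norm_num) (by norm_num)
    rw [map_sub] at h2
    convert h2 using 1
    ring
  obtain ⟨X, hX, FL, FK, hF0, hFL, hFK⟩ := digits_exist w wL (algebraMap K L) r hr0 hr1 hrL
    N hN0 hN P hP0 hP d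
  choose Y hY0 hY using fun x => hsurj (FK x) (hF0 x)
  choose g hg using fun x => hFL (Y x) (hY0 x)
  have hginj : Function.Injective g := by
    intro x x' hxx
    apply hFK
    rw [← hY, ← hY]
    apply hcongr _ _ (hY0 x')
    have h1 := (hg x).sub (hg x')
    rw [hxx] at h1
    convert h1 using 1
    ring
  have hgsurj : Function.Surjective g := Finite.surjective_of_injective hginj
  -- every integral element is congruent to one of the `Y x`
  have hYc : ∀ y : L, wL.Ge 0 y → ∃ x, wL.Ge d (Y x - y) := by
    intro y hy
    obtain ⟨x₁, hx₁⟩ := hFL y hy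
    obtain ⟨x, rfl⟩ := hgsurj x₁
    refine ⟨x, ?_⟩
    have h1 := (hg x).sub hx₁
    convert h1 using 1
    ring
  have hinj : ∀ y y' : L, wL.Ge 0 y → wL.Ge 0 y' → Algebra.norm K y = Algebra.norm K y' →
      wL.Ge d (y - y') := by
    intro y y' hy hy' hn
    obtain ⟨x, hx⟩ := hYc y hy
    obtain ⟨x', hx'⟩ := hYc y' hy'
    have h1 := (hcongr _ _ hy hx).sub (hcongr _ _ hy' hx')
    rw [hY, hY, hn, sub_sub_sub_cancel_right] at h1
    have h2 := hFK _ _ h1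
    subst h2
    have h3 := hx'.sub hx
    convert h3 using 1
    ring
  have hnT : Algebra.norm K (algebraMap K L T + algebraMap K L (-1) * P) = N := by
    rw [hnorm]
    ring
  have hn1 : Algebra.norm K ((algebraMap K L T + algebraMap K L (-1) * P) / P) = 1 := by
    have h1 : Algebra.norm K ((algebraMap K L T + algebraMap K L (-1) * P) / P) * N = N := by
      rw [← hnormP, ← map_mul, div_mul_cancel₀ _ hP0, hnT, hnormP]
    exact mul_right_cancel₀ hN0 (by rw [h1, one_mul])
  have hfin := hinj _ 1 (hintegral _ (by rw [hn1]; exact ge_one)) ge_one (by rw [hn1, map_one])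
  have h3 : (algebraMap K L T + algebraMap K L (-1) * P) / P - 1 =
      (algebraMap K L T + algebraMap K L (-2) * P) / P := by
    field_simp
    simp only [map_neg, map_one, map_ofNat]
    ring
  rw [h3] at hfin
  have h4 := hfin.le (div_ne_zero hD0 hP0)
  rw [wL.v_div hD0 hP0, hD, hP] at h4
  omega

/-- If `L|K` is a ramified quadratic extension of a finite extension `K` of
`ℚ_p` (ramification index `2`, encoded by `w_L ∘ (K → L) = 2·w_K` for the
normalized valuations), then the unit group `𝔬^×` of `K` is not contained in
the norm group `N_{L|K}(L^×)`:  some unit of `K` is not a norm from `L^×`. -/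
theorem units_not_contained_in_norms_of_ramified
    (p : ℕ) [Fact p.Prime]
    (K : Type*) [Field K] [Algebra ℚ_[p] K] [FiniteDimensional ℚ_[p] K]
    (w : DValuation K)
    (hext : ∀ x : ℚ_[p], x ≠ 0 →
      w.v (algebraMap ℚ_[p] K x) = w.v (algebraMap ℚ_[p] K (p : ℚ_[p])) * x.valuation)
    (L : Type*) [Field L] [Algebra K L] (hL2 : Module.finrank K L = 2)
    (wL : DValuation L)
    (hram : ∀ x : K, x ≠ 0 → wL.v (algebraMap K L x) = 2 * w.v x) :
    ∃ u : K, u ≠ 0 ∧ w.v u = 0 ∧ ¬ ∃ y : L, y ≠ 0 ∧ Algebra.norm K y = u := by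
  obtain ⟨κ, hκ, r, hr0, hr1, hr2⟩ := residue_reps p K w hext
  have h2K : (2 : K) ≠ 0 := by
    have : CharZero K := charZero_of_injective_algebraMap (algebraMap ℚ_[p] K).injective
    exact two_ne_zero
  exact ramified_aux w hL2 wL hram h2K r hr0 hr1 hr2
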